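/- Let R ⊆ {0,1}^n be a relation that is not componentwise bijunctive, i.e. some connected component of the solution graph G(R) is not closed under the coordinatewise application of maj. Then there exist a relation Q obtained from R by adding 2-clauses — that is, Q = R ∩ ⋂_{(i,j)∈P} {a ∈ {0,1}^n | (a_i, a_j) ∈ E_{ij}} for some finite set P of pairs of distinct coordinates and three-element sets E_{ij} ⊆ {0,1}² — and vectors a, b ∈ Q such that a and b are connected in G(Q) but d_Q(a,b) > |a − b| (the distance between a and b expands in Q). -/

import Mathlib

/-- Coordinatewise majority operation on `Bool`. -/
def maj (x y z : Bool) : Bool := (x && y) || (y && z) || (z && x)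

/-- One step in the solution graph of `R`: both endpoints are solutions and
they differ in exactly one coordinate. -/
def stepR {ι : Type*} [Fintype ι] [DecidableEq ι] (R : Set (ι → Bool))
    (a b : ι → Bool) : Prop :=
  a ∈ R ∧ b ∈ R ∧ hammingDist a b = 1

/-- `a` and `b` are connected in the solution graph of `R`. -/
def connIn {ι : Type*} [Fintype ι] [DecidableEq ι] (R : Set (ι → Bool)) :
    (ι → Bool) → (ι → Bool) → Prop :=
  Relation.ReflTransGen (stepR R)

/-- There is a path of length `k` from `a` to `b` in the solution graph of `R`. -/
def hasPathLen {ι : Type*} [Fintype ι] [DecidableEq ι] (R : Set (ι → Bool)) :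
    ℕ → (ι → Bool) → (ι → Bool) → Prop
  | 0, a, b => a = b
  | k + 1, a, b => ∃ c, stepR R a c ∧ hasPathLen R k c b

/-- Shortest-path distance in the solution graph of `R`. -/
noncomputable def distIn {ι : Type*} [Fintype ι] [DecidableEq ι] (R : Set (ι → Bool))
    (a b : ι → Bool) : ℕ :=
  sInf {k | hasPathLen R k a b}

/-! Suppose that no distance expands in `R`. Then every component `C` of `G(R)` is an isometric
subgraph of the cube: from any `p ∈ C` one can change a single coordinate towards any other `q ∈ C`
without leaving `C`. Take `x, y, z ∈ C` whose majority `m` is not in `C`. Moving `x` one step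
towards `y` changes `m` in the same coordinate or not at all; as long as `m` stays outside `C` the
pair `x, y` has come closer, and if `m` would enter `C`, its new value can replace `y`. This makes
`y` adjacent to `m` without taking `x` farther from `m`, so moving `y` towards `z` next makes `z`
adjacent to `m` as well: `y = m + e_v` and `z = m + e_w`, where `x` agrees with `m` in the
coordinates `v` and `w`. The 2-clause `r_v = m_v ∨ r_w = m_w` keeps the geodesics from `y` and `z`
to `x` but excludes `m + e_v + e_w`. The only other common neighbour of `y` and `z` in the cube is
`m ∉ R`, so their distance expands. -/

open Function

section Hamming

variable {ι : Type*} [Fintype ι] [DecidableEq ι] {β : ι → Type*} [∀ i, DecidableEq (β i)]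

lemma hammingDist_update_update_le (x y : ∀ i, β i) (j : ι) (c : β j) :
    hammingDist (update x j c) (update y j c) ≤ hammingDist x y := by
  refine Finset.card_le_card fun i hi => ?_
  simp only [Finset.mem_filter_univ] at hi ⊢
  intro hxy
  rcases eq_or_ne i j with rfl | hij
  · simp only [update_self, ne_eq, not_true_eq_false] at hi
  · exact hi (by rw [update_of_ne hij, update_of_ne hij, hxy])

lemma hammingDist_update_apply_lt {x y : ∀ i, β i} {j : ι} (h : x j ≠ y j) :
    hammingDist (update x j (y j)) y < hammingDist x y := by
  refine Finset.card_lt_card (Finset.ssubset_iff_of_subset (fun i hi => ?_) |>.2 ⟨j, ?_, ?_⟩)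
  · rcases eq_or_ne i j with rfl | hij
    · simpa using h
    · simpa [hij] using hi
  · simpa using h
  · simp

lemma hammingDist_self_update {x : ∀ i, β i} {j : ι} {c : β j} (h : x j ≠ c) :
    hammingDist x (update x j c) = 1 := by
  refine Finset.card_eq_one.2 ⟨j, Finset.ext fun i => ?_⟩
  rcases eq_or_ne i j with rfl | hij
  · simpa using h
  · simp [hij]

lemma exists_eq_update_of_hammingDist_eq_one {x y : ∀ i, β i} (h : hammingDist x y = 1) :
    ∃ j, x j ≠ y j ∧ y = update x j (y j) := by
  obtain ⟨j, hj⟩ := Finset.card_eq_one.1 h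
  have hdiff (i : ι) : x i ≠ y i ↔ i = j := by
    simpa using Finset.ext_iff.1 hj i
  refine ⟨j, (hdiff j).2 rfl, eq_update_iff.2 ⟨rfl, fun i hi => ?_⟩⟩
  exact (not_ne_iff.1 (mt (hdiff i).1 hi)).symm

end Hamming

section SolutionGraph

variable {ι : Type*} [Fintype ι] [DecidableEq ι] {R S : Set (ι → Bool)} {a b p q : ι → Bool}

lemma stepR.symm (h : stepR R a b) : stepR R b a :=
  ⟨h.2.1, h.1, hammingDist_comm b a ▸ h.2.2⟩

lemma connIn.symm (h : connIn R a b) : connIn R b a :=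
  Relation.ReflTransGen.mono (fun _ _ => stepR.symm) _ _ (Relation.ReflTransGen.swap _ _ h)

lemma connIn.mono (hRS : R ⊆ S) (h : connIn R a b) : connIn S a b :=
  Relation.ReflTransGen.mono (fun _ _ hs => ⟨hRS hs.1, hRS hs.2.1, hs.2.2⟩) _ _ h

lemma connIn.exists_hasPathLen (h : connIn R a b) : ∃ k, hasPathLen R k a b := by
  induction h using Relation.ReflTransGen.head_induction_on with
  | refl => exact ⟨0, rfl⟩
  | head hstep _ ih =>
    obtain ⟨k, hk⟩ := ih
    exact ⟨k + 1, _, hstep, hk⟩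

lemma connIn.hasPathLen_distIn (h : connIn R a b) : hasPathLen R (distIn R a b) a b :=
  Nat.sInf_mem h.exists_hasPathLen

lemma hasPathLen.hammingDist_le {k : ℕ} (h : hasPathLen R k a b) : hammingDist a b ≤ k := by
  induction k generalizing a with
  | zero => exact (hammingDist_eq_zero.2 h).le
  | succ k ih =>
    obtain ⟨c, hac, hcb⟩ := h
    calc hammingDist a b ≤ hammingDist a c + hammingDist c b := hammingDist_triangle a c b
      _ ≤ 1 + k := Nat.add_le_add hac.2.2.le (ih hcb)
      _ = k + 1 := Nat.add_comm 1 k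

lemma connIn.exists_update_mem (h : connIn R p q) (hne : p ≠ q)
    (hdist : distIn R p q ≤ hammingDist p q) : ∃ j, p j ≠ q j ∧ update p j (q j) ∈ R := by
  have hpath := h.hasPathLen_distIn
  generalize distIn R p q = k at hdist hpath
  cases k with
  | zero => exact absurd hpath hne
  | succ k =>
    obtain ⟨c, hpc, hcq⟩ := hpath
    obtain ⟨j, hpcj, hc⟩ := exists_eq_update_of_hammingDist_eq_one hpc.2.2
    have hpqj : p j ≠ q j := by
      intro hpqj
      have hle : hammingDist p q ≤ hammingDist c q := by
        have := hammingDist_update_update_le c q j (q j)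
        rwa [update_eq_self, hc, update_idem, ← hpqj, update_eq_self, ← hc] at this
      have := hcq.hammingDist_le
      omega
    have hcqj : c j = q j := by
      rw [Bool.eq_not.2 hpcj.symm, Bool.eq_not.2 hpqj.symm]
    exact ⟨j, hpqj, hcqj ▸ hc ▸ hpc.2.1⟩

/-- The connected component of `a` in the solution graph of `R`. -/
def component (R : Set (ι → Bool)) (a : ι → Bool) : Set (ι → Bool) :=
  {v | v ∈ R ∧ connIn R a v}

lemma component_subset : component R a ⊆ R := fun _ hv => hv.1

lemma mem_component_of_hammingDist_eq_one (hp : p ∈ component R a) (hq : q ∈ R)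
    (hpq : hammingDist p q = 1) : q ∈ component R a :=
  ⟨hq, hp.2.tail ⟨hp.1, hq, hpq⟩⟩

/-- Some distance expands in `Q`: two connected vectors of `Q` are farther apart in the solution
graph of `Q` than in the cube. -/
def Expands (Q : Set (ι → Bool)) : Prop :=
  ∃ a ∈ Q, ∃ b ∈ Q, connIn Q a b ∧ hammingDist a b < distIn Q a b

lemma expands_of_update_notMem (hp : p ∈ R) (hq : q ∈ R) (hpq : connIn R p q) (hne : p ≠ q)
    (hstep : ∀ j, p j ≠ q j → update p j (q j) ∉ R) : Expands R := by
  refine ⟨p, hp, q, hq, hpq, not_le.1 fun hdist => ?_⟩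
  obtain ⟨j, hj, hmem⟩ := hpq.exists_update_mem hne hdist
  exact hstep j hj hmem

end SolutionGraph

section Isometric

variable {ι : Type*} [DecidableEq ι] {C : Set (ι → Bool)}

/-- The solution graph of `C` is an isometric subgraph of the cube, expressed locally: from every
vector of `C`, some single-coordinate move towards any other given vector of `C` stays in `C`. -/
def IsIsometric (C : Set (ι → Bool)) : Prop :=
  ∀ p ∈ C, ∀ q ∈ C, p ≠ q → ∃ j, p j ≠ q j ∧ update p j (q j) ∈ C

lemma IsIsometric.sep_apply_eq (hC : IsIsometric C) (i : ι) (c : Bool) :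
    IsIsometric {r ∈ C | r i = c} := by
  rintro p ⟨hp, hpi⟩ q ⟨hq, hqi⟩ hne
  obtain ⟨j, hj, hmem⟩ := hC p hp q hq hne
  have hij : i ≠ j := by
    rintro rfl
    exact hj (hpi.trans hqi.symm)
  exact ⟨j, hj, hmem, (update_of_ne hij _ _).trans hpi⟩

variable [Fintype ι]

lemma IsIsometric.connIn_of_mem (hC : IsIsometric C) {p q : ι → Bool} (hp : p ∈ C) (hq : q ∈ C) :
    connIn C p q := by
  induction hd : hammingDist p q using Nat.strong_induction_on generalizing p with
  | _ d ih =>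
    subst hd
    rcases eq_or_ne p q with rfl | hne
    · exact .refl
    obtain ⟨j, hj, hmem⟩ := hC p hp q hq hne
    exact .head ⟨hp, hmem, hammingDist_self_update hj⟩
      (ih _ (hammingDist_update_apply_lt hj) hmem rfl)

lemma isIsometric_component {R : Set (ι → Bool)} (hR : ¬ Expands R) (a : ι → Bool) :
    IsIsometric (component R a) := by
  intro p hp q hq hne
  have hpq : connIn R p q := hp.2.symm.trans hq.2
  have hdist : distIn R p q ≤ hammingDist p q :=
    not_lt.1 fun hlt => hR ⟨p, hp.1, q, hq.1, hpq, hlt⟩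
  obtain ⟨j, hj, hmem⟩ := hpq.exists_update_mem hne hdist
  exact ⟨j, hj, mem_component_of_hammingDist_eq_one hp hmem (hammingDist_self_update hj)⟩

end Isometric

section Majority

variable {a b c : Bool}

lemma maj_rotate (a b c : Bool) : maj b c a = maj a b c := by
  decide +revert

lemma maj_self_left (a c : Bool) : maj a a c = a := by
  decide +revert

lemma maj_maj_middle (a b c : Bool) : maj a (maj a b c) c = maj a b c := by
  decide +revert

lemma maj_eq_left_of_ne_middle (h : maj a b c ≠ b) : maj a b c = a := by
  decide +revert

lemma maj_eq_left_of_ne_right (h : maj a b c ≠ c) : maj a b c = a := by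
  decide +revert

lemma maj_eq_right_of_ne_middle (h : maj a b c ≠ b) : maj a b c = c := by
  decide +revert

variable {ι : Type*}

/-- The coordinatewise majority of three vectors. -/
def majority (x y z : ι → Bool) : ι → Bool := fun i => maj (x i) (y i) (z i)

/-- A set of vectors is bijunctive if it is closed under coordinatewise majority. -/
def IsBijunctive (C : Set (ι → Bool)) : Prop :=
  ∀ x ∈ C, ∀ y ∈ C, ∀ z ∈ C, majority x y z ∈ C

lemma majority_rotate (x y z : ι → Bool) : majority y z x = majority x y z :=
  funext fun _ => maj_rotate _ _ _

lemma majority_self_left (x z : ι → Bool) : majority x x z = x :=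
  funext fun _ => maj_self_left _ _

variable [DecidableEq ι]

lemma majority_update_apply (x y z : ι → Bool) (j : ι) :
    majority (update x j (y j)) y z = update (majority x y z) j (y j) := by
  refine eq_update_iff.2 ⟨?_, fun i hij => ?_⟩
  · simp only [majority, update_self, maj_self_left]
  · simp only [majority, update_of_ne hij]

lemma majority_update_majority {x y z : ι → Bool} {j : ι} (hj : majority x y z j ≠ y j) :
    majority x (update (majority x y z) j (y j)) z = majority x y z := by
  funext i
  rcases eq_or_ne i j with rfl | hij
  · simp only [majority, update_self]
  · simp only [majority, update_of_ne hij, maj_maj_middle]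

variable {C : Set (ι → Bool)}

lemma IsIsometric.exists_hammingDist_majority_eq_one [Fintype ι] (hC : IsIsometric C)
    {x y z : ι → Bool} (hx : x ∈ C) (hy : y ∈ C) (hm : majority x y z ∉ C) :
    ∃ x' ∈ C, ∃ y' ∈ C, majority x' y' z ∉ C ∧
      hammingDist (majority x' y' z) x' ≤ hammingDist (majority x y z) x ∧
      hammingDist (majority x' y' z) y' = 1 := by
  induction hd : hammingDist x y using Nat.strong_induction_on generalizing x with
  | _ d ih =>
    subst hd
    have hxy : x ≠ y := by
      rintro rfl
      exact hm ((majority_self_left x z).symm ▸ hx)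
    obtain ⟨j, hj, hx'⟩ := hC x hx y hy hxy
    by_cases hm' : update (majority x y z) j (y j) ∈ C
    · have hmj : majority x y z j ≠ y j := fun h => hm (by rwa [← h, update_eq_self] at hm')
      refine ⟨x, hx, _, hm', ?_⟩
      rw [majority_update_majority hmj]
      exact ⟨hm, le_rfl, hammingDist_self_update hmj⟩
    · rw [← majority_update_apply] at hm'
      obtain ⟨x₁, hx₁, y₁, hy₁, hm₁, hle, hone⟩ :=
        ih _ (hammingDist_update_apply_lt hj) hx' hm' rfl
      refine ⟨x₁, hx₁, y₁, hy₁, hm₁, hle.trans ?_, hone⟩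
      rw [majority_update_apply]
      exact hammingDist_update_update_le _ _ _ _

lemma IsIsometric.exists_hammingDist_eq_one_of_not_isBijunctive [Fintype ι] (hC : IsIsometric C)
    (hmaj : ¬ IsBijunctive C) :
    ∃ x ∈ C, ∃ y ∈ C, ∃ z ∈ C, majority x y z ∉ C ∧
      hammingDist (majority x y z) y = 1 ∧ hammingDist (majority x y z) z = 1 := by
  simp only [IsBijunctive, not_forall] at hmaj
  obtain ⟨x₀, hx₀, y₀, hy₀, z₀, hz₀, hm₀⟩ := hmaj
  obtain ⟨x, hx, y₁, hy₁, hm₁, -, hone₁⟩ :=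
    hC.exists_hammingDist_majority_eq_one hx₀ hy₀ hm₀
  rw [← majority_rotate] at hm₁ hone₁
  obtain ⟨y, hy, z, hz, hm, hle, hone⟩ :=
    hC.exists_hammingDist_majority_eq_one hy₁ hz₀ hm₁
  have hne : majority y z x ≠ y := fun h => hm (h.symm ▸ hy)
  have hpos := hammingDist_pos.2 hne
  rw [majority_rotate] at hm hle hone hpos
  exact ⟨x, hx, y, hy, z, hz, hm, by omega, hone⟩

lemma IsIsometric.exists_corner [Finite ι] (hC : IsIsometric C) (hmaj : ¬ IsBijunctive C) :
    ∃ m ∉ C, ∃ v w, v ≠ w ∧ update m v (!m v) ∈ C ∧ update m w (!m w) ∈ C ∧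
      ∃ x ∈ C, x v = m v ∧ x w = m w := by
  have := Fintype.ofFinite ι
  obtain ⟨x, hx, y, hy, z, hz, hm, hmy, hmz⟩ :=
    hC.exists_hammingDist_eq_one_of_not_isBijunctive hmaj
  obtain ⟨v, hv, hyv⟩ := exists_eq_update_of_hammingDist_eq_one hmy
  obtain ⟨w, hw, hzw⟩ := exists_eq_update_of_hammingDist_eq_one hmz
  have hvw : v ≠ w := by
    rintro rfl
    exact hw (maj_eq_right_of_ne_middle hv)
  refine ⟨majority x y z, hm, v, w, hvw, ?_, ?_, x, hx, ?_, ?_⟩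
  · rwa [← Bool.eq_not.2 hv.symm, ← hyv]
  · rwa [← Bool.eq_not.2 hw.symm, ← hzw]
  · exact (maj_eq_left_of_ne_middle hv).symm
  · exact (maj_eq_left_of_ne_right hw).symm

end Majority

section TwoClauses

variable {ι : Type*}

/-- The relation obtained from `R` by adding, for every pair `p ∈ P`, the constraint that the
coordinates `p.1` and `p.2` take values in `E p`. -/
def addTwoClauses (R : Set (ι → Bool)) (P : Finset (ι × ι))
    (E : ι × ι → Finset (Bool × Bool)) : Set (ι → Bool) :=
  {v | v ∈ R ∧ ∀ p ∈ P, (v p.1, v p.2) ∈ E p}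

lemma addTwoClauses_empty (R : Set (ι → Bool)) (E : ι × ι → Finset (Bool × Bool)) :
    addTwoClauses R ∅ E = R := by
  simp [addTwoClauses]

lemma addTwoClauses_singleton_erase (R : Set (ι → Bool)) (v w : ι) (b c : Bool) :
    addTwoClauses R {(v, w)} (fun _ => Finset.univ.erase (!b, !c)) =
      {r ∈ R | r v = b ∨ r w = c} := by
  ext r
  simp only [addTwoClauses, Set.mem_ofPred_eq, Finset.mem_singleton, forall_eq, Finset.mem_erase,
    Finset.mem_univ, and_true, ne_eq, Prod.mk.injEq, not_and_or, Bool.eq_not, not_not]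

variable [Fintype ι] [DecidableEq ι]

lemma IsIsometric.expands_sep_of_corner {R C : Set (ι → Bool)} (hC : IsIsometric C) (hCR : C ⊆ R)
    {m x : ι → Bool} {v w : ι} (hm : m ∉ R) (hvw : v ≠ w) (hv : update m v (!m v) ∈ C)
    (hw : update m w (!m w) ∈ C) (hx : x ∈ C) (hxv : x v = m v) (hxw : x w = m w) :
    Expands {r ∈ R | r v = m v ∨ r w = m w} := by
  set y := update m v (!m v)
  set z := update m w (!m w)
  have hyv : y v = !m v := update_self ..
  have hyw : y w = m w := update_of_ne hvw.symm ..
  have hzv : z v = m v := update_of_ne hvw ..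
  have hzw : z w = !m w := update_self ..
  have hyx : connIn {r ∈ R | r v = m v ∨ r w = m w} y x :=
    ((hC.sep_apply_eq w (m w)).connIn_of_mem ⟨hv, hyw⟩ ⟨hx, hxw⟩).mono
      fun _ hr => ⟨hCR hr.1, .inr hr.2⟩
  have hzx : connIn {r ∈ R | r v = m v ∨ r w = m w} z x :=
    ((hC.sep_apply_eq v (m v)).connIn_of_mem ⟨hw, hzv⟩ ⟨hx, hxv⟩).mono
      fun _ hr => ⟨hCR hr.1, .inl hr.2⟩
  refine expands_of_update_notMem ⟨hCR hv, .inr hyw⟩ ⟨hCR hw, .inl hzv⟩ (hyx.trans hzx.symm)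
    (fun h => by simp [h, hzv] at hyv) fun j hj hmem => ?_
  rcases eq_or_ne j v with rfl | hjv
  · have hback : update y j (z j) = m := by rw [hzv, update_idem, update_eq_self]
    exact hm (hback ▸ hmem.1)
  rcases eq_or_ne j w with rfl | hjw
  · simpa [hjv.symm, hyv, hzw] using hmem.2
  · exact hj ((update_of_ne hjv ..).trans (update_of_ne hjw ..).symm)

/-- A relation is componentwise bijunctive if every connected component of its solution graph is
closed under coordinatewise majority. -/
def IsComponentwiseBijunctive (R : Set (ι → Bool)) : Prop :=
  ∀ a ∈ R, IsBijunctive (component R a)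

theorem stmt15_general (R : Set (ι → Bool)) (hR : ¬ IsComponentwiseBijunctive R) :
    ∃ (P : Finset (ι × ι)) (E : ι × ι → Finset (Bool × Bool)), P.card ≤ 1 ∧
      (∀ p ∈ P, p.1 ≠ p.2 ∧ (E p).card = 3) ∧ Expands (addTwoClauses R P E) := by
  by_cases hexp : Expands R
  · exact ⟨∅, fun _ => ∅, by simp, by simp, by rwa [addTwoClauses_empty]⟩
  simp only [IsComponentwiseBijunctive, not_forall] at hR
  obtain ⟨a, -, hmaj⟩ := hR
  have hC := isIsometric_component hexp a
  obtain ⟨m, hm, v, w, hvw, hv, hw, x, hx, hxv, hxw⟩ := hC.exists_corner hmaj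
  have hmR : m ∉ R := fun h => hm <| mem_component_of_hammingDist_eq_one hv h <| by
    rw [hammingDist_comm]
    exact hammingDist_self_update (Bool.not_ne_self _).symm
  refine ⟨{(v, w)}, fun _ => Finset.univ.erase (!m v, !m w), by simp, ?_, ?_⟩
  · simpa using hvw
  · rw [addTwoClauses_singleton_erase]
    exact hC.expands_sep_of_corner component_subset hmR hvw hv hw hx hxv hxw

end TwoClauses

/-- If some connected component of `G(R)` is not closed under coordinatewise
majority (`R` is not componentwise bijunctive), then by adding 2-clauses
(constraints `(a i, a j) ∈ E p` with `E p` a three-element subset of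
`{0,1}²`) one obtains a relation `Q` in which some distance expands. -/
theorem stmt15 {n : ℕ} (R : Set (Fin n → Bool))
    (hncb : ∃ a ∈ R, ∃ x ∈ R, ∃ y ∈ R, ∃ z ∈ R,
      connIn R a x ∧ connIn R a y ∧ connIn R a z ∧
      ¬((fun i => maj (x i) (y i) (z i)) ∈ R ∧
        connIn R a (fun i => maj (x i) (y i) (z i)))) :
    ∃ (P : Finset (Fin n × Fin n)) (E : Fin n × Fin n → Finset (Bool × Bool)),
      (∀ p ∈ P, p.1 ≠ p.2 ∧ (E p).card = 3) ∧
      ∃ a ∈ {v | v ∈ R ∧ ∀ p ∈ P, (v p.1, v p.2) ∈ E p},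
        ∃ b ∈ {v | v ∈ R ∧ ∀ p ∈ P, (v p.1, v p.2) ∈ E p},
          connIn {v | v ∈ R ∧ ∀ p ∈ P, (v p.1, v p.2) ∈ E p} a b ∧
          hammingDist a b <
            distIn {v | v ∈ R ∧ ∀ p ∈ P, (v p.1, v p.2) ∈ E p} a b := by
  obtain ⟨a, ha, x, hx, y, hy, z, hz, hax, hay, haz, hm⟩ := hncb
  obtain ⟨P, E, -, h⟩ := stmt15_general R fun hR =>
    hm (hR a ha x ⟨hx, hax⟩ y ⟨hy, hay⟩ z ⟨hz, haz⟩)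
  exact ⟨P, E, h⟩
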